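/- There exist constants ε₀ ∈ (0,1) and C > 0 with the following property. Let ν ∈ (0,1], k ∈ ℤ with |k| ≥ 1 and νk² ≤ 1, ε ∈ (0, ε₀], and λ ∈ ℝ. Let w_{Na} : [−1,1] → ℂ be twice continuously differentiable with w_{Na}(−1) = w_{Na}(1) = 0, and set F(y) = −ν(w_{Na}''(y) − k²w_{Na}(y)) + ik(y−λ)w_{Na}(y) − ε·ν^{1/3}|k|^{2/3}w_{Na}(y). Define c₁ = −∫_{−1}^{1} (sinh(k(y+1))/sinh(2k))·w_{Na}(y) dy and c₂ = ∫_{−1}^{1} (sinh(k(1−y))/sinh(2k))·w_{Na}(y) dy. Then (1+|k(λ−1)|)·|c₁| + (1+|k(λ+1)|)·|c₂| ≤ C·ν^{−1/6}|k|^{−5/6}·‖F‖_{L²}. -/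

import Mathlib

/-- The `L²` norm of a function on the interval `[-1,1]`. -/
noncomputable def nL2 (f : ℝ → ℂ) : ℝ :=
  (∫ y in Set.Icc (-1:ℝ) 1, ‖f y‖ ^ 2) ^ ((1:ℝ)/2)

/-!
Test the resolvent equation `F = couetteResolvent ν k lam s w` against `w` and against the
multiplier `i (y - lam) w`. The first identity controls `ν ‖w'‖²`, and the second controls
`|k| ‖(y - lam) w‖²` up to the commutator `ν ‖w'‖ ‖w‖`. Together with the uncertainty inequality
`‖w‖² ≤ 2 ‖(y - lam) w‖ ‖w'‖`, and in units of the critical layer width `δ = (ν / |k|) ^ (1 / 3)`,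
these form a closed system giving `|k| δ ‖w‖ ≲ ‖F‖` and `|k| ‖(y - lam) w‖ ≲ ‖F‖`; the shift `s` is
absorbed because it is at most `|k| δ / 8`.

Cauchy–Schwarz with the weight `((y - lam)² + δ²)⁻¹`, whose integral is at most `π / δ`, turns this
into a bound on `∫ |w|`. The kernels of `c₁` and `c₂` are at most `exp (-|k| |y - e|)` for an
endpoint `e`. Since `|lam - e| ≤ |y - e| + |y - lam|`, the factor `1 + |k| |lam - e|` is either
absorbed by this decay or replaced by the weight `|k| |y - lam|`, which the resolvent estimate
controls.
-/

open MeasureTheory Real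
open scoped InnerProductSpace

section IntervalNorm

variable {E G : Type*} [NormedAddCommGroup E] [NormedAddCommGroup G] {a b : ℝ}

/-- The `L²` norm on `[a, b]`, for `a ≤ b`. -/
noncomputable def l2Norm (a b : ℝ) (f : ℝ → E) : ℝ :=
  √(∫ y in a..b, ‖f y‖ ^ 2)

lemma nL2_eq_l2Norm (f : ℝ → ℂ) : nL2 f = l2Norm (-1) 1 f := by
  rw [nL2, l2Norm, sqrt_eq_rpow, integral_Icc_eq_integral_Ioc,
    intervalIntegral.integral_of_le (by norm_num)]

lemma l2Norm_nonneg (f : ℝ → E) : 0 ≤ l2Norm a b f := sqrt_nonneg _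

lemma sq_l2Norm (hab : a ≤ b) (f : ℝ → E) : l2Norm a b f ^ 2 = ∫ y in a..b, ‖f y‖ ^ 2 :=
  sq_sqrt (intervalIntegral.integral_nonneg hab fun _ _ => sq_nonneg _)

lemma l2Norm_congr_norm {f : ℝ → E} {g : ℝ → G} (h : ∀ y, ‖f y‖ = ‖g y‖) :
    l2Norm a b f = l2Norm a b g := by
  simp only [l2Norm, h]

lemma memLp_two_restrict_Ioc {f : ℝ → E} (hf : Continuous f) :
    MemLp f (ENNReal.ofReal 2) (volume.restrict (Set.Ioc a b)) := by
  rw [ENNReal.ofReal_ofNat, memLp_two_iff_integrable_sq_norm hf.aestronglyMeasurable]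
  exact (hf.norm.pow 2).integrableOn_Ioc

lemma integral_norm_mul_norm_le_l2Norm_mul (hab : a ≤ b) {f : ℝ → E} {g : ℝ → G}
    (hf : Continuous f) (hg : Continuous g) :
    ∫ y in a..b, ‖f y‖ * ‖g y‖ ≤ l2Norm a b f * l2Norm a b g := by
  simpa only [l2Norm, sqrt_eq_rpow, intervalIntegral.integral_of_le hab, rpow_two] using
    integral_mul_le_Lp_mul_Lq_of_nonneg HolderConjugate.two_two
      (.of_forall fun y => norm_nonneg (f y)) (.of_forall fun y => norm_nonneg (g y))
      (memLp_two_restrict_Ioc hf.norm) (memLp_two_restrict_Ioc hg.norm)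

end IntervalNorm

section IntegrationByParts

variable {E : Type*} [NormedAddCommGroup E] [InnerProductSpace ℝ E] {a b : ℝ}

lemma abs_integral_inner_le_l2Norm_mul (hab : a ≤ b) {f g : ℝ → E} (hf : Continuous f)
    (hg : Continuous g) : |∫ y in a..b, ⟪f y, g y⟫_ℝ| ≤ l2Norm a b f * l2Norm a b g :=
  calc |∫ y in a..b, ⟪f y, g y⟫_ℝ|
      ≤ ∫ y in a..b, |⟪f y, g y⟫_ℝ| := intervalIntegral.abs_integral_le_integral_abs hab
    _ ≤ ∫ y in a..b, ‖f y‖ * ‖g y‖ :=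
        intervalIntegral.integral_mono_on hab
          (Continuous.intervalIntegrable (by fun_prop) _ _)
          (Continuous.intervalIntegrable (by fun_prop) _ _) fun y _ => abs_real_inner_le_norm _ _
    _ ≤ l2Norm a b f * l2Norm a b g := integral_norm_mul_norm_le_l2Norm_mul hab hf hg

lemma integral_inner_deriv_left_eq_neg {u v : ℝ → E} (hu : ContDiff ℝ 1 u) (hv : ContDiff ℝ 1 v)
    (hva : v a = 0) (hvb : v b = 0) :
    ∫ y in a..b, ⟪deriv u y, v y⟫_ℝ = -∫ y in a..b, ⟪u y, deriv v y⟫_ℝ := by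
  have hu' := hu.continuous_deriv_one
  have hv' := hv.continuous_deriv_one
  have hint₁ : Continuous fun y => ⟪u y, deriv v y⟫_ℝ := hu.continuous.inner hv'
  have hint₂ : Continuous fun y => ⟪deriv u y, v y⟫_ℝ := hu'.inner hv.continuous
  have hder (y : ℝ) : HasDerivAt (fun t => ⟪u t, v t⟫_ℝ)
      (⟪u y, deriv v y⟫_ℝ + ⟪deriv u y, v y⟫_ℝ) y :=
    ((hu.differentiable one_ne_zero y).hasDerivAt).inner ℝ
      (hv.differentiable one_ne_zero y).hasDerivAt
  have hFTC := intervalIntegral.integral_eq_sub_of_hasDerivAt (a := a) (b := b)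
    (fun y _ => hder y) ((hint₁.add hint₂).intervalIntegrable _ _)
  rw [intervalIntegral.integral_add (hint₁.intervalIntegrable _ _)
    (hint₂.intervalIntegrable _ _), hva, hvb, inner_zero_right, inner_zero_right, sub_zero] at hFTC
  linarith

lemma hasDerivAt_sub_const_smul {w : ℝ → E} (hw : Differentiable ℝ w) (lam y : ℝ) :
    HasDerivAt (fun t => (t - lam) • w t) (w y + (y - lam) • deriv w y) y := by
  simpa [add_comm] using! ((hasDerivAt_id y).sub_const lam).smul (hw y).hasDerivAt

lemma sq_l2Norm_le_two_mul_l2Norm_deriv (hab : a ≤ b) {w : ℝ → E} (hw : ContDiff ℝ 1 w)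
    (hwa : w a = 0) (hwb : w b = 0) (lam : ℝ) :
    l2Norm a b w ^ 2 ≤ 2 * (l2Norm a b (fun y => (y - lam) • w y) * l2Norm a b (deriv w)) := by
  have hw' := hw.continuous_deriv_one
  have hwc := hw.continuous
  have hparts := integral_inner_deriv_left_eq_neg (a := a) (b := b) hw
    (v := fun y => (y - lam) • w y) (by fun_prop) (by simp [hwa]) (by simp [hwb])
  have hswap (y : ℝ) : ⟪w y, deriv (fun t => (t - lam) • w t) y⟫_ℝ
      = ‖w y‖ ^ 2 + ⟪deriv w y, (y - lam) • w y⟫_ℝ := by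
    rw [(hasDerivAt_sub_const_smul (hw.differentiable one_ne_zero) lam y).deriv, inner_add_right,
      real_inner_self_eq_norm_sq, real_inner_smul_right, real_inner_smul_right, real_inner_comm]
  simp only [hswap] at hparts
  rw [intervalIntegral.integral_add (Continuous.intervalIntegrable (by fun_prop) _ _)
    (Continuous.intervalIntegrable (by fun_prop) _ _), ← sq_l2Norm hab] at hparts
  have hCS := neg_le_of_abs_le (abs_integral_inner_le_l2Norm_mul hab (f := deriv w)
    (g := fun y => (y - lam) • w y) hw' (by fun_prop))
  linarith

end IntegrationByParts

section LayerWidth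

variable {ν k : ℝ}

/-- The width `δ` of the critical layer, the scale at which the viscosity `ν δ⁻²` balances the
transport `|k| δ`. -/
noncomputable def layerWidth (ν k : ℝ) : ℝ :=
  (ν / |k|) ^ ((1 : ℝ) / 3)

lemma layerWidth_pos (hν : 0 < ν) (hk : k ≠ 0) : 0 < layerWidth ν k := by
  unfold layerWidth
  positivity

lemma abs_mul_layerWidth_pow_three (hν : 0 ≤ ν) (hk : k ≠ 0) : |k| * layerWidth ν k ^ 3 = ν := by
  rw [layerWidth, ← rpow_mul_natCast (by positivity)]
  rw [Nat.cast_ofNat, one_div_mul_cancel three_ne_zero, rpow_one,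
    mul_div_cancel₀ ν (abs_ne_zero.2 hk)]

lemma abs_mul_layerWidth (hν : 0 ≤ ν) (hk : k ≠ 0) :
    |k| * layerWidth ν k = ν ^ ((1 : ℝ) / 3) * |k| ^ ((2 : ℝ) / 3) := by
  rw [layerWidth, div_rpow hν (abs_nonneg k), show (2 : ℝ) / 3 = 1 - 1 / 3 by norm_num,
    rpow_sub (abs_pos.2 hk), rpow_one]
  ring

lemma inv_abs_mul_sqrt_layerWidth (hν : 0 ≤ ν) (hk : k ≠ 0) :
    (|k| * √(layerWidth ν k))⁻¹ = ν ^ (-(1 : ℝ) / 6) * |k| ^ (-(5 : ℝ) / 6) := by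
  rw [layerWidth, sqrt_eq_rpow, ← rpow_mul (by positivity), div_rpow hν (abs_nonneg k),
    show -(1 : ℝ) / 6 = -(1 / 3 * (1 / 2)) by norm_num,
    show -(5 : ℝ) / 6 = 1 / 3 * (1 / 2) - 1 by norm_num, rpow_neg hν,
    rpow_sub (abs_pos.2 hk), rpow_one, mul_inv, inv_div]
  ring

lemma abs_mul_layerWidth_le_one (hν : 0 ≤ ν) (hk : k ≠ 0) (hνk : ν * k ^ 2 ≤ 1) :
    |k| * layerWidth ν k ≤ 1 := by
  refine (pow_le_one_iff_of_nonneg ?_ three_ne_zero).1 ?_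
  · unfold layerWidth
    positivity
  · calc (|k| * layerWidth ν k) ^ 3 = |k| * layerWidth ν k ^ 3 * |k| ^ 2 := by ring
      _ ≤ 1 := by rwa [abs_mul_layerWidth_pow_three hν hk, sq_abs]

end LayerWidth

section Resolvent

variable {a b ν k lam s : ℝ} {w : ℝ → ℂ}

/-- The resolvent operator, at spectral parameter `lam` and with growth shift `s`, of the vorticity
equation linearised at Couette flow, for the Fourier mode `k`. -/
noncomputable def couetteResolvent (ν k lam s : ℝ) (w : ℝ → ℂ) (y : ℝ) : ℂ :=
  -(ν : ℂ) * (deriv (deriv w) y - (k : ℂ) ^ 2 * w y) + Complex.I * k * (y - lam) * w y - s * w y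

lemma continuous_couetteResolvent (hw : ContDiff ℝ 2 w) :
    Continuous (couetteResolvent ν k lam s w) := by
  have hwc := hw.continuous
  have : Continuous (deriv (deriv w)) := (hw.deriv' (n := 1)).continuous_deriv_one
  unfold couetteResolvent
  fun_prop

lemma couetteResolvent_eq_smul (w : ℝ → ℂ) (y : ℝ) :
    couetteResolvent ν k lam s w y = (-ν) • deriv (deriv w) y + (ν * k ^ 2 - s) • w y
      + k • ((y - lam) • (Complex.I * w y)) := by
  simp only [couetteResolvent, Complex.real_smul]
  push_cast
  ring

lemma real_inner_self_I_mul (z : ℂ) : ⟪z, Complex.I * z⟫_ℝ = 0 := by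
  simp [Complex.inner, mul_comm]

lemma inner_couetteResolvent_self (w : ℝ → ℂ) (y : ℝ) :
    ⟪couetteResolvent ν k lam s w y, w y⟫_ℝ
      = -ν * ⟪deriv (deriv w) y, w y⟫_ℝ + (ν * k ^ 2 - s) * ‖w y‖ ^ 2 := by
  simp only [couetteResolvent_eq_smul, inner_add_left, real_inner_smul_left,
    real_inner_self_eq_norm_sq, real_inner_comm (w y) (Complex.I * w y), real_inner_self_I_mul]
  ring

lemma inner_couetteResolvent_I_mul (w : ℝ → ℂ) (y : ℝ) :
    ⟪couetteResolvent ν k lam s w y, (y - lam) • (Complex.I * w y)⟫_ℝ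
      = -ν * ⟪deriv (deriv w) y, (y - lam) • (Complex.I * w y)⟫_ℝ
        + k * ‖(y - lam) • w y‖ ^ 2 := by
  simp only [couetteResolvent_eq_smul, inner_add_left, real_inner_smul_left,
    real_inner_self_eq_norm_sq, real_inner_smul_right, real_inner_self_I_mul, norm_smul, norm_mul,
    Complex.norm_I, one_mul, mul_pow, norm_eq_abs, sq_abs]
  ring

lemma energy_estimate (hab : a ≤ b) (hν : 0 ≤ ν) (hw : ContDiff ℝ 2 w) (hwa : w a = 0)
    (hwb : w b = 0) :
    ν * l2Norm a b (deriv w) ^ 2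
      ≤ l2Norm a b (couetteResolvent ν k lam s w) * l2Norm a b w + s * l2Norm a b w ^ 2 := by
  have hw₁ : ContDiff ℝ 1 w := hw.of_le one_le_two
  have hw' : ContDiff ℝ 1 (deriv w) := hw.deriv' (n := 1)
  have : Continuous (deriv (deriv w)) := hw'.continuous_deriv_one
  have hwc := hw.continuous
  have hparts := integral_inner_deriv_left_eq_neg (a := a) (b := b) hw' hw₁ hwa hwb
  simp only [real_inner_self_eq_norm_sq, ← sq_l2Norm hab] at hparts
  have htest : ∫ y in a..b, ⟪couetteResolvent ν k lam s w y, w y⟫_ℝ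
      = ν * l2Norm a b (deriv w) ^ 2 + (ν * k ^ 2 - s) * l2Norm a b w ^ 2 := by
    simp only [inner_couetteResolvent_self]
    rw [intervalIntegral.integral_add (Continuous.intervalIntegrable (by fun_prop) _ _)
        (Continuous.intervalIntegrable (by fun_prop) _ _), intervalIntegral.integral_const_mul,
      intervalIntegral.integral_const_mul, hparts, ← sq_l2Norm hab]
    ring
  have hCS := le_of_abs_le (abs_integral_inner_le_l2Norm_mul hab
    (continuous_couetteResolvent (ν := ν) (k := k) (lam := lam) (s := s) hw) hwc)
  have : 0 ≤ ν * k ^ 2 * l2Norm a b w ^ 2 := by positivity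
  linarith

lemma integral_inner_deriv_deriv_I_mul (hw : ContDiff ℝ 2 w) (hwa : w a = 0) (hwb : w b = 0) :
    ∫ y in a..b, ⟪deriv (deriv w) y, (y - lam) • (Complex.I * w y)⟫_ℝ
      = -∫ y in a..b, ⟪deriv w y, Complex.I * w y⟫_ℝ := by
  have hw₁ : ContDiff ℝ 1 w := hw.of_le one_le_two
  have hderiv (y : ℝ) : deriv (fun t => (t - lam) • (Complex.I * w t)) y
      = Complex.I * w y + (y - lam) • (Complex.I * deriv w y) := by
    rw [(hasDerivAt_sub_const_smul ((hw₁.differentiable one_ne_zero).const_mul _) lam y).deriv,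
      deriv_const_mul _ (hw₁.differentiable one_ne_zero y)]
  rw [integral_inner_deriv_left_eq_neg (v := fun y => (y - lam) • (Complex.I * w y))
    (hw.deriv' (n := 1)) (by fun_prop) (by simp [hwa]) (by simp [hwb])]
  simp only [hderiv, inner_add_right, real_inner_smul_right, real_inner_self_I_mul, mul_zero,
    add_zero]

lemma weighted_energy_estimate (hab : a ≤ b) (hν : 0 ≤ ν) (hw : ContDiff ℝ 2 w) (hwa : w a = 0)
    (hwb : w b = 0) :
    |k| * l2Norm a b (fun y => (y - lam) • w y) ^ 2
      ≤ l2Norm a b (couetteResolvent ν k lam s w) * l2Norm a b (fun y => (y - lam) • w y)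
        + ν * (l2Norm a b (deriv w) * l2Norm a b w) := by
  have hwc := hw.continuous
  have hw' : ContDiff ℝ 1 (deriv w) := hw.deriv' (n := 1)
  have : Continuous (deriv (deriv w)) := hw'.continuous_deriv_one
  have htest : ∫ y in a..b, ⟪couetteResolvent ν k lam s w y, (y - lam) • (Complex.I * w y)⟫_ℝ
      = ν * (∫ y in a..b, ⟪deriv w y, Complex.I * w y⟫_ℝ)
        + k * l2Norm a b (fun y => (y - lam) • w y) ^ 2 := by
    simp only [inner_couetteResolvent_I_mul]
    rw [intervalIntegral.integral_add (Continuous.intervalIntegrable (by fun_prop) _ _)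
        (Continuous.intervalIntegrable (by fun_prop) _ _), intervalIntegral.integral_const_mul,
      intervalIntegral.integral_const_mul, integral_inner_deriv_deriv_I_mul hw hwa hwb,
      ← sq_l2Norm hab, neg_mul_neg]
  have hF := abs_integral_inner_le_l2Norm_mul hab
    (continuous_couetteResolvent (ν := ν) (k := k) (lam := lam) (s := s) hw)
    (g := fun y => (y - lam) • (Complex.I * w y)) (by fun_prop)
  have hI := abs_integral_inner_le_l2Norm_mul hab hw'.continuous
    (g := fun y => Complex.I * w y) (by fun_prop)
  rw [l2Norm_congr_norm (f := fun y => (y - lam) • (Complex.I * w y))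
    (g := fun y => (y - lam) • w y) (fun y => by simp)] at hF
  rw [l2Norm_congr_norm (f := fun y => Complex.I * w y) (g := w) (fun y => by simp)] at hI
  calc |k| * l2Norm a b (fun y => (y - lam) • w y) ^ 2
      = |(∫ y in a..b, ⟪couetteResolvent ν k lam s w y, (y - lam) • (Complex.I * w y)⟫_ℝ)
          - ν * ∫ y in a..b, ⟪deriv w y, Complex.I * w y⟫_ℝ| := by
        rw [htest, add_sub_cancel_left, abs_mul, abs_sq]
    _ ≤ |∫ y in a..b, ⟪couetteResolvent ν k lam s w y, (y - lam) • (Complex.I * w y)⟫_ℝ|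
          + ν * |∫ y in a..b, ⟪deriv w y, Complex.I * w y⟫_ℝ| := by
        rw [← abs_of_nonneg hν, ← abs_mul, abs_of_nonneg hν]
        exact abs_sub _ _
    _ ≤ _ := by gcongr

lemma le_of_interpolation {A B D G : ℝ} (hA : 0 ≤ A) (hB : 0 ≤ B) (hG : 0 ≤ G)
    (hD : D ^ 2 ≤ G * A) (hBD : B ^ 2 ≤ G * B + D * A) (hAB : A ^ 2 ≤ 2 * (B * D)) :
    A ≤ 4 * G ∧ B ≤ 3 * G := by
  have hA3 : A ^ 3 ≤ 4 * G * B ^ 2 := by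
    rcases hA.eq_or_lt with rfl | hA'
    · rw [zero_pow three_ne_zero]
      positivity
    refine le_of_mul_le_mul_right ?_ hA'
    calc A ^ 3 * A = (A ^ 2) ^ 2 := by ring
      _ ≤ (2 * (B * D)) ^ 2 := by gcongr
      _ = 4 * B ^ 2 * D ^ 2 := by ring
      _ ≤ 4 * B ^ 2 * (G * A) := by gcongr
      _ = 4 * G * B ^ 2 * A := by ring
  have hDA : D * A ≤ 2 * G * B := by
    refine le_of_abs_le (abs_le_of_sq_le_sq ?_ (by positivity))
    calc (D * A) ^ 2 = D ^ 2 * A ^ 2 := by ring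
      _ ≤ G * A * A ^ 2 := by gcongr
      _ = G * A ^ 3 := by ring
      _ ≤ G * (4 * G * B ^ 2) := by gcongr
      _ = (2 * G * B) ^ 2 := by ring
  have hB3 : B ≤ 3 * G := by
    rcases hB.eq_or_lt with rfl | hB'
    · positivity
    · refine le_of_mul_le_mul_right ?_ hB'
      linarith
  refine ⟨?_, hB3⟩
  refine le_of_pow_le_pow_left₀ three_ne_zero (by positivity) ?_
  calc A ^ 3 ≤ 4 * G * B ^ 2 := hA3
    _ ≤ 4 * G * (3 * G) ^ 2 := by gcongr
    _ = 36 * G ^ 3 := by ring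
    _ ≤ (4 * G) ^ 3 := by linarith [pow_nonneg hG 3]

lemma le_of_resolvent_system {A B D f s K δ : ℝ} (hA : 0 ≤ A) (hB : 0 ≤ B) (hf : 0 ≤ f)
    (hK : 0 < K) (hδ : 0 < δ) (hs : s ≤ 1 / 8 * (K * δ))
    (hE : K * δ ^ 3 * D ^ 2 ≤ f * A + s * A ^ 2)
    (hX : K * B ^ 2 ≤ f * B + K * δ ^ 3 * (D * A)) (hU : A ^ 2 ≤ 2 * (B * D)) :
    K * (δ * A) ≤ 8 * f ∧ K * B ≤ 6 * f := by
  set G := f / K + 1 / 8 * (δ * A) with hG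
  have hKG : K * G = f + 1 / 8 * (K * δ) * A := by rw [hG]; field_simp
  have hD : (δ ^ 2 * D) ^ 2 ≤ G * (δ * A) := by
    refine le_of_mul_le_mul_left ?_ hK
    calc K * (δ ^ 2 * D) ^ 2 = δ * (K * δ ^ 3 * D ^ 2) := by ring
      _ ≤ δ * (f * A + s * A ^ 2) := by gcongr
      _ ≤ δ * (f * A + 1 / 8 * (K * δ) * A ^ 2) := by gcongr
      _ = (f + 1 / 8 * (K * δ) * A) * (δ * A) := by ring
      _ = K * (G * (δ * A)) := by rw [← hKG, mul_assoc]
  have hBD : B ^ 2 ≤ G * B + δ ^ 2 * D * (δ * A) := by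
    refine le_of_mul_le_mul_left ?_ hK
    calc K * B ^ 2 ≤ f * B + K * δ ^ 3 * (D * A) := hX
      _ ≤ (f + 1 / 8 * (K * δ) * A) * B + K * δ ^ 3 * (D * A) := by
        gcongr
        exact le_add_of_nonneg_right (by positivity)
      _ = K * (G * B + δ ^ 2 * D * (δ * A)) := by rw [← hKG]; ring
  have hAB : (δ * A) ^ 2 ≤ 2 * (B * (δ ^ 2 * D)) :=
    calc (δ * A) ^ 2 = δ ^ 2 * A ^ 2 := by ring
      _ ≤ δ ^ 2 * (2 * (B * D)) := by gcongr
      _ = 2 * (B * (δ ^ 2 * D)) := by ring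
  obtain ⟨hAG, hBG⟩ := le_of_interpolation (by positivity) hB (by positivity) hD hBD hAB
  have hKA := mul_le_mul_of_nonneg_left hAG hK.le
  have hKB := mul_le_mul_of_nonneg_left hBG hK.le
  constructor <;> linarith

lemma resolvent_estimate (hab : a ≤ b) (hν : 0 < ν) (hk : k ≠ 0)
    (hs : s ≤ 1 / 8 * (|k| * layerWidth ν k)) (hw : ContDiff ℝ 2 w) (hwa : w a = 0)
    (hwb : w b = 0) :
    |k| * (layerWidth ν k * l2Norm a b w) ≤ 8 * l2Norm a b (couetteResolvent ν k lam s w) ∧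
      |k| * l2Norm a b (fun y => (y - lam) • w y)
        ≤ 6 * l2Norm a b (couetteResolvent ν k lam s w) := by
  have hν_eq := abs_mul_layerWidth_pow_three hν.le hk
  refine le_of_resolvent_system (D := l2Norm a b (deriv w)) (l2Norm_nonneg w) (l2Norm_nonneg _)
    (l2Norm_nonneg _) (abs_pos.2 hk) (layerWidth_pos hν hk) hs ?_ ?_
    (sq_l2Norm_le_two_mul_l2Norm_deriv hab (hw.of_le one_le_two) hwa hwb lam)
  · rw [hν_eq]
    exact energy_estimate hab hν.le hw hwa hwb
  · rw [hν_eq]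
    exact weighted_energy_estimate hab hν.le hw hwa hwb

end Resolvent

section CauchyWeight

lemma integral_inv_sub_sq_add_sq_le (a b lam : ℝ) {δ : ℝ} (hδ : 0 < δ) :
    ∫ y in a..b, ((y - lam) ^ 2 + δ ^ 2)⁻¹ ≤ π / δ := by
  have hscale (y : ℝ) :
      ((y - lam) ^ 2 + δ ^ 2)⁻¹ = (δ ^ 2)⁻¹ * (1 + (y / δ - lam / δ) ^ 2)⁻¹ := by
    rw [← mul_inv]
    congr 1
    field_simp
    ring
  simp only [hscale, intervalIntegral.integral_const_mul]
  rw [intervalIntegral.integral_comp_div_sub (fun t => (1 + t ^ 2)⁻¹) hδ.ne',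
    integral_inv_one_add_sq, smul_eq_mul]
  calc (δ ^ 2)⁻¹ * (δ * (arctan (b / δ - lam / δ) - arctan (a / δ - lam / δ)))
      ≤ (δ ^ 2)⁻¹ * (δ * π) := by
        gcongr
        linarith [arctan_lt_pi_div_two (b / δ - lam / δ),
          neg_pi_div_two_lt_arctan (a / δ - lam / δ)]
    _ = π / δ := by field_simp

variable {E : Type*} [NormedAddCommGroup E] [NormedSpace ℝ E] {a b δ : ℝ}

lemma integral_norm_le_sqrt_mul_sqrt (hab : a ≤ b) (hδ : 0 < δ) {w : ℝ → E} (hw : Continuous w)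
    (lam : ℝ) :
    ∫ y in a..b, ‖w y‖
      ≤ √(l2Norm a b (fun y => (y - lam) • w y) ^ 2 + (δ * l2Norm a b w) ^ 2) * √(π / δ) := by
  set ρ : ℝ → ℝ := fun y => √((y - lam) ^ 2 + δ ^ 2)
  have hρ_sq (y : ℝ) : ρ y ^ 2 = (y - lam) ^ 2 + δ ^ 2 := sq_sqrt (by positivity)
  have hρ_pos (y : ℝ) : 0 < ρ y := sqrt_pos.2 (by positivity)
  have hρ : Continuous ρ := by fun_prop
  have hCS := integral_norm_mul_norm_le_l2Norm_mul hab (f := fun y => ρ y • w y)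
    (g := fun y => (ρ y)⁻¹) (hρ.smul hw) (hρ.inv₀ fun y => (hρ_pos y).ne')
  have hprod (y : ℝ) : ‖ρ y • w y‖ * ‖(ρ y)⁻¹‖ = ‖w y‖ := by
    rw [norm_smul, norm_inv, mul_right_comm, mul_inv_cancel₀ (norm_ne_zero_iff.2 (hρ_pos y).ne'),
      one_mul]
  have hweighted : l2Norm a b (fun y => ρ y • w y) ^ 2
      = l2Norm a b (fun y => (y - lam) • w y) ^ 2 + (δ * l2Norm a b w) ^ 2 := by
    rw [mul_pow, sq_l2Norm hab, sq_l2Norm hab, sq_l2Norm hab,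
      ← intervalIntegral.integral_const_mul, ← intervalIntegral.integral_add
        (Continuous.intervalIntegrable (by fun_prop) _ _)
        (Continuous.intervalIntegrable (by fun_prop) _ _)]
    simp only [norm_smul, mul_pow, norm_eq_abs, sq_abs, hρ_sq, add_mul]
  have hinv : l2Norm a b (fun y => (ρ y)⁻¹) ≤ √(π / δ) := by
    refine sqrt_le_sqrt ?_
    simp only [norm_eq_abs, sq_abs, inv_pow, hρ_sq]
    exact integral_inv_sub_sq_add_sq_le a b lam hδ
  simp only [hprod] at hCS
  rw [← hweighted, sqrt_sq (l2Norm_nonneg _)]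
  exact hCS.trans (mul_le_mul_of_nonneg_left hinv (l2Norm_nonneg _))

end CauchyWeight

section BoundaryLayer

lemma abs_sinh_div_sinh_le_exp {x z : ℝ} (h : |x| ≤ |z|) :
    |sinh x / sinh z| ≤ exp (|x| - |z|) := by
  rw [abs_div, abs_sinh, abs_sinh]
  refine div_le_of_le_mul₀ (sinh_nonneg_iff.2 (abs_nonneg z)) (exp_pos _).le ?_
  have hpos : exp (|x| - |z|) * exp |z| = exp |x| := by rw [← exp_add, sub_add_cancel]
  have hneg : exp (|x| - |z|) * exp (-|z|) ≤ exp (-|x|) := by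
    rw [← exp_add, exp_le_exp]
    linarith
  rw [sinh_eq, sinh_eq]
  linarith

lemma integral_exp_neg_mul_abs_sub {c : ℝ} (hc : 0 < c) (e : ℝ) :
    ∫ y, exp (-(c * |y - e|)) = 2 / c := by
  rw [integral_sub_right_eq_self (fun y => exp (-(c * |y|))) e,
    integral_comp_abs (f := fun y => exp (-(c * y)))]
  simp only [← neg_mul]
  rw [integral_exp_mul_Ioi (neg_neg_of_pos hc)]
  simp [div_eq_mul_inv]

variable {a b K e : ℝ} {m : ℝ → ℝ}

lemma l2Norm_le_of_abs_le_exp (hab : a ≤ b) (hK : 0 < K) (hm : Continuous m)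
    (hme : ∀ y ∈ Set.Icc a b, |m y| ≤ exp (-(K * |y - e|))) : l2Norm a b m ≤ (√K)⁻¹ := by
  have hval := integral_exp_neg_mul_abs_sub (mul_pos two_pos hK) e
  have hint : Integrable fun y => exp (-(2 * K * |y - e|)) :=
    .of_integral_ne_zero (by rw [hval]; positivity)
  rw [← sqrt_inv]
  refine sqrt_le_sqrt ?_
  calc ∫ y in a..b, ‖m y‖ ^ 2
      ≤ ∫ y in a..b, exp (-(2 * K * |y - e|)) := by
        refine intervalIntegral.integral_mono_on hab
          (Continuous.intervalIntegrable (by fun_prop) _ _)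
          (Continuous.intervalIntegrable (by fun_prop) _ _) fun y hy => ?_
        calc ‖m y‖ ^ 2 ≤ exp (-(K * |y - e|)) ^ 2 := by
              gcongr
              exact hme y hy
          _ = exp (-(2 * K * |y - e|)) := by
              rw [← exp_nat_mul]
              push_cast
              ring_nf
    _ ≤ ∫ y, exp (-(2 * K * |y - e|)) := by
        rw [intervalIntegral.integral_of_le hab]
        exact setIntegral_le_integral hint (.of_forall fun y => (exp_pos _).le)
    _ = K⁻¹ := by rw [hval]; field_simp

lemma one_add_mul_abs_mul_le_of_le_exp {t : ℝ} (hK : 0 ≤ K) (y lam : ℝ)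
    (ht : |t| ≤ exp (-(K * |y - e|))) :
    (1 + K * |lam - e|) * |t| ≤ 1 + K * (|t| * |y - lam|) := by
  have hdecay : (1 + K * |y - e|) * |t| ≤ 1 :=
    calc (1 + K * |y - e|) * |t| ≤ exp (K * |y - e|) * exp (-(K * |y - e|)) := by
          gcongr
          linarith [add_one_le_exp (K * |y - e|)]
      _ = 1 := by rw [← exp_add, add_neg_cancel, exp_zero]
  have htri : |lam - e| ≤ |y - e| + |y - lam| := by
    rw [add_comm, abs_sub_comm y lam]
    exact abs_sub_le _ _ _
  calc (1 + K * |lam - e|) * |t| ≤ (1 + K * (|y - e| + |y - lam|)) * |t| := by gcongr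
    _ = (1 + K * |y - e|) * |t| + K * (|t| * |y - lam|) := by ring
    _ ≤ 1 + K * (|t| * |y - lam|) := by gcongr

variable {E : Type*} [NormedAddCommGroup E] [NormedSpace ℝ E]

lemma one_add_mul_norm_integral_smul_le (hab : a ≤ b) (hK : 0 < K) (hm : Continuous m)
    (hme : ∀ y ∈ Set.Icc a b, |m y| ≤ exp (-(K * |y - e|))) {w : ℝ → E} (hw : Continuous w)
    (lam : ℝ) :
    (1 + K * |lam - e|) * ‖∫ y in a..b, m y • w y‖
      ≤ (∫ y in a..b, ‖w y‖) + √K * l2Norm a b (fun y => (y - lam) • w y) := by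
  have hCS := integral_norm_mul_norm_le_l2Norm_mul hab hm
    (g := fun y => (y - lam) • w y) (by fun_prop)
  calc (1 + K * |lam - e|) * ‖∫ y in a..b, m y • w y‖
      ≤ (1 + K * |lam - e|) * ∫ y in a..b, ‖m y • w y‖ := by
        gcongr
        exact intervalIntegral.norm_integral_le_integral_norm hab
    _ = ∫ y in a..b, (1 + K * |lam - e|) * ‖m y • w y‖ := by
        rw [intervalIntegral.integral_const_mul]
    _ ≤ ∫ y in a..b, (‖w y‖ + K * (‖m y‖ * ‖(y - lam) • w y‖)) := by
        refine intervalIntegral.integral_mono_on hab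
          (Continuous.intervalIntegrable (by fun_prop) _ _)
          (Continuous.intervalIntegrable (by fun_prop) _ _) fun y hy => ?_
        have hpt := mul_le_mul_of_nonneg_right
          (one_add_mul_abs_mul_le_of_le_exp hK.le y lam (hme y hy)) (norm_nonneg (w y))
        simp only [norm_smul, norm_eq_abs]
        linarith
    _ = (∫ y in a..b, ‖w y‖) + K * ∫ y in a..b, ‖m y‖ * ‖(y - lam) • w y‖ := by
        rw [intervalIntegral.integral_add (Continuous.intervalIntegrable (by fun_prop) _ _)
          (Continuous.intervalIntegrable (by fun_prop) _ _), intervalIntegral.integral_const_mul]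
    _ ≤ (∫ y in a..b, ‖w y‖) + K * ((√K)⁻¹ * l2Norm a b (fun y => (y - lam) • w y)) := by
        gcongr
        exact hCS.trans (mul_le_mul_of_nonneg_right (l2Norm_le_of_abs_le_exp hab hK hm hme)
          (l2Norm_nonneg _))
    _ = (∫ y in a..b, ‖w y‖) + √K * l2Norm a b (fun y => (y - lam) • w y) := by
        rw [← mul_assoc, ← div_eq_mul_inv, div_sqrt]

end BoundaryLayer

section Coefficients

variable {a b ν k lam s : ℝ} {w : ℝ → ℂ}

lemma integral_norm_le_resolvent (hab : a ≤ b) (hν : 0 < ν) (hk : k ≠ 0)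
    (hs : s ≤ 1 / 8 * (|k| * layerWidth ν k)) (hw : ContDiff ℝ 2 w) (hwa : w a = 0)
    (hwb : w b = 0) :
    ∫ y in a..b, ‖w y‖
      ≤ 20 * ((|k| * √(layerWidth ν k))⁻¹ * l2Norm a b (couetteResolvent ν k lam s w)) := by
  obtain ⟨hA, hB⟩ := resolvent_estimate (lam := lam) hab hν hk hs hw hwa hwb
  have hδ := layerWidth_pos hν hk
  have hK : 0 < |k| := abs_pos.2 hk
  have hF := l2Norm_nonneg (a := a) (b := b) (couetteResolvent ν k lam s w)
  have hA₀ := mul_nonneg hδ.le (l2Norm_nonneg (a := a) (b := b) w)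
  have hB₀ := l2Norm_nonneg (a := a) (b := b) fun y => (y - lam) • w y
  refine (integral_norm_le_sqrt_mul_sqrt hab hδ hw.continuous lam).trans ?_
  set f := l2Norm a b (couetteResolvent ν k lam s w)
  set δ := layerWidth ν k
  rw [← le_div_iff₀' hK] at hA hB
  have hsum : √(l2Norm a b (fun y => (y - lam) • w y) ^ 2 + (δ * l2Norm a b w) ^ 2)
      ≤ 10 * f / |k| := by
    refine sqrt_le_iff.2 ⟨by positivity, ?_⟩
    calc l2Norm a b (fun y => (y - lam) • w y) ^ 2 + (δ * l2Norm a b w) ^ 2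
        ≤ (6 * f / |k|) ^ 2 + (8 * f / |k|) ^ 2 := by gcongr
      _ = (10 * f / |k|) ^ 2 := by ring
  have hpi : √π ≤ 2 := sqrt_le_iff.2 ⟨zero_le_two, by linarith [pi_lt_four]⟩
  calc _ ≤ 10 * f / |k| * (2 / √δ) := by
        rw [sqrt_div pi_pos.le]
        gcongr
    _ = 20 * ((|k| * √δ)⁻¹ * f) := by
        field_simp
        ring

lemma coefficient_estimate {e : ℝ} {m : ℝ → ℝ} (hab : a ≤ b) (hν : 0 < ν) (hk : k ≠ 0)
    (hνk : ν * k ^ 2 ≤ 1) (hs : s ≤ 1 / 8 * (|k| * layerWidth ν k)) (hw : ContDiff ℝ 2 w)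
    (hwa : w a = 0) (hwb : w b = 0) (hm : Continuous m)
    (hme : ∀ y ∈ Set.Icc a b, |m y| ≤ exp (-(|k| * |y - e|))) :
    (1 + |k| * |lam - e|) * ‖∫ y in a..b, m y • w y‖
      ≤ 26 * ((|k| * √(layerWidth ν k))⁻¹ * l2Norm a b (couetteResolvent ν k lam s w)) := by
  have hL1 := integral_norm_le_resolvent (lam := lam) hab hν hk hs hw hwa hwb
  have hB := (resolvent_estimate (lam := lam) hab hν hk hs hw hwa hwb).2
  have hKδ := abs_mul_layerWidth_le_one hν.le hk hνk
  have hδ := layerWidth_pos hν hk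
  have hK : 0 < |k| := abs_pos.2 hk
  refine (one_add_mul_norm_integral_smul_le hab hK hm hme hw.continuous lam).trans ?_
  have hB₀ := l2Norm_nonneg (a := a) (b := b) fun y => (y - lam) • w y
  set f := l2Norm a b (couetteResolvent ν k lam s w)
  set δ := layerWidth ν k
  have hsqrt : √|k| ≤ (√δ)⁻¹ := by
    rw [← sqrt_inv]
    exact sqrt_le_sqrt (by rwa [← one_div, le_div_iff₀ hδ])
  have hweighted : √|k| * l2Norm a b (fun y => (y - lam) • w y) ≤ 6 * ((|k| * √δ)⁻¹ * f) :=
    calc √|k| * l2Norm a b (fun y => (y - lam) • w y) ≤ (√δ)⁻¹ * (6 * f / |k|) := by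
          gcongr
          exact (le_div_iff₀' hK).2 hB
      _ = 6 * ((|k| * √δ)⁻¹ * f) := by field_simp
  linarith

lemma abs_sinh_div_sinh_le_exp_right {y : ℝ} (k : ℝ) (hy : y ∈ Set.Icc a b) :
    |sinh (k * (y - a)) / sinh (k * (b - a))| ≤ exp (-(|k| * |y - b|)) := by
  have h₁ : |y - a| = y - a := abs_of_nonneg (by linarith [hy.1])
  have h₂ : |b - a| = b - a := abs_of_nonneg (by linarith [hy.1, hy.2])
  have h₃ : |y - b| = b - y := by rw [abs_sub_comm, abs_of_nonneg (by linarith [hy.2])]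
  refine (abs_sinh_div_sinh_le_exp ?_).trans_eq ?_
  · rw [abs_mul, abs_mul, h₁, h₂]
    gcongr
    exact hy.2
  · rw [abs_mul, abs_mul, h₁, h₂, h₃]
    ring_nf

lemma abs_sinh_div_sinh_le_exp_left {y : ℝ} (k : ℝ) (hy : y ∈ Set.Icc a b) :
    |sinh (k * (b - y)) / sinh (k * (b - a))| ≤ exp (-(|k| * |y - a|)) := by
  have h := abs_sinh_div_sinh_le_exp_right (a := a) (b := b) (y := a + b - y) k
    ⟨by linarith [hy.2], by linarith [hy.1]⟩
  rwa [show a + b - y - a = b - y by ring, show a + b - y - b = -(y - a) by ring, abs_neg] at h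

theorem statement5_general {ε : ℝ} (hab : a < b) (hν : 0 < ν) (hk : k ≠ 0)
    (hνk : ν * k ^ 2 ≤ 1) (hε : ε ≤ 1 / 8) (hw : ContDiff ℝ 2 w) (hwa : w a = 0) (hwb : w b = 0) :
    (1 + |k * (lam - b)|)
          * ‖∫ y in a..b, ((sinh (k * (y - a)) / sinh (k * (b - a)) : ℝ) : ℂ) * w y‖
        + (1 + |k * (lam - a)|)
          * ‖∫ y in a..b, ((sinh (k * (b - y)) / sinh (k * (b - a)) : ℝ) : ℂ) * w y‖
      ≤ 52 * ν ^ (-(1 : ℝ) / 6) * |k| ^ (-(5 : ℝ) / 6) * l2Norm a b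
          (couetteResolvent ν k lam (ε * ν ^ ((1 : ℝ) / 3) * |k| ^ ((2 : ℝ) / 3)) w) := by
  have hs : ε * ν ^ ((1 : ℝ) / 3) * |k| ^ ((2 : ℝ) / 3) ≤ 1 / 8 * (|k| * layerWidth ν k) := by
    rw [mul_assoc, ← abs_mul_layerWidth hν.le hk]
    have := layerWidth_pos hν hk
    gcongr
  have hright := coefficient_estimate (lam := lam) hab.le hν hk hνk hs hw hwa hwb
    (m := fun y => sinh (k * (y - a)) / sinh (k * (b - a))) (by fun_prop)
    fun y hy => abs_sinh_div_sinh_le_exp_right k hy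
  have hleft := coefficient_estimate (lam := lam) hab.le hν hk hνk hs hw hwa hwb
    (m := fun y => sinh (k * (b - y)) / sinh (k * (b - a))) (by fun_prop)
    fun y hy => abs_sinh_div_sinh_le_exp_left k hy
  rw [inv_abs_mul_sqrt_layerWidth hν.le hk] at hright hleft
  simp only [Complex.real_smul] at hright hleft
  rw [abs_mul, abs_mul]
  linarith

end Coefficients

/-- `L²` bounds on the boundary-corrector coefficients `c₁, c₂`. -/
theorem statement5 :
    ∃ ε₀ C : ℝ, 0 < ε₀ ∧ ε₀ < 1 ∧ 0 < C ∧
      ∀ (ν : ℝ) (k : ℤ) (ε lam : ℝ) (wNa F : ℝ → ℂ) (c₁ c₂ : ℂ),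
        0 < ν → ν ≤ 1 → 1 ≤ |k| → ν * (k:ℝ)^2 ≤ 1 → 0 < ε → ε ≤ ε₀ →
        ContDiff ℝ 2 wNa → wNa (-1) = 0 → wNa 1 = 0 →
        (F = fun y : ℝ => -(ν : ℂ) * (deriv (deriv wNa) y - (k:ℂ)^2 * wNa y)
            + Complex.I * (k:ℂ) * ((y:ℂ) - (lam:ℂ)) * wNa y
            - ((ε * ν ^ ((1:ℝ)/3) * |(k:ℝ)| ^ ((2:ℝ)/3) : ℝ) : ℂ) * wNa y) →
        c₁ = -∫ y in Set.Icc (-1:ℝ) 1,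
              ((Real.sinh ((k:ℝ) * (y + 1)) / Real.sinh (2 * (k:ℝ)) : ℝ) : ℂ) * wNa y →
        c₂ = ∫ y in Set.Icc (-1:ℝ) 1,
              ((Real.sinh ((k:ℝ) * (1 - y)) / Real.sinh (2 * (k:ℝ)) : ℝ) : ℂ) * wNa y →
        (1 + |(k:ℝ) * (lam - 1)|) * ‖c₁‖ + (1 + |(k:ℝ) * (lam + 1)|) * ‖c₂‖
          ≤ C * ν ^ (-(1:ℝ)/6) * |(k:ℝ)| ^ (-(5:ℝ)/6) * nL2 F := by
  refine ⟨1 / 8, 52, by norm_num, by norm_num, by norm_num, ?_⟩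
  rintro ν k ε lam w _ _ _ hν - hk hνk - hε hw hw₁ hw₂ rfl rfl rfl
  have hk₀ : (k : ℝ) ≠ 0 := Int.cast_ne_zero.2 (abs_pos.1 hk)
  have h := statement5_general (lam := lam) (by norm_num) hν hk₀ hνk hε hw hw₁ hw₂
  rw [show (k : ℝ) * (1 - -1) = 2 * k by ring] at h
  simpa only [norm_neg, nL2_eq_l2Norm, integral_Icc_eq_integral_Ioc, sub_neg_eq_add,
    intervalIntegral.integral_of_le (show (-1 : ℝ) ≤ 1 by norm_num)] using! h
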